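/- (Main Proposition 3, part (2).) Fix α,β,γ ∈ ℂ, and define F₁(γ;v₁,v₂) := −γv₂(v₂−1)/(v₁(v₁−1)(v₁−v₂)), F₂(γ;v₁,v₂) := −γv₁(v₁−1)/(v₂(v₂−1)(v₂−v₁)), P₁(α,β,γ;v₁,v₂) := α/v₁ + β/(v₁−1) + γ/(v₁−v₂), P₂(α,β,γ;v₁,v₂) := α/v₂ + β/(v₂−1) + γ/(v₂−v₁). Let S₁(v₁,v₂) := (v₁/v₂, 1/v₂) and S₂(v₁,v₂) := (1/v₁, v₂/v₁). Let s₁,s₂ be holomorphic on an open set D of points (v₁,v₂) with v₁,v₂ ∉ {0,1}, v₁ ≠ v₂, with J(s₁,s₂) ≠ 0, satisfying the system {s₁,s₂;v₁,v₂}_{v₁} = F₁(γ;v₁,v₂), {s₁,s₂;v₁,v₂}_{v₂} = F₂(γ;v₁,v₂), [s₁,s₂;v₁,v₂]_{v₁} = P₁(α,β,γ;v₁,v₂), [s₁,s₂;v₁,v₂]_{v₂} = P₂(α,β,γ;v₁,v₂) on D. Then at every point (v₁,v₂) with v₁,v₂ ∉ {0,1} and v₁ ≠ v₂: if S₁(v₁,v₂)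 ∈ D then the pair (s₁∘S₁, s₂∘S₁) satisfies {s₁∘S₁, s₂∘S₁; v₁,v₂}_{v₁} = F₁(γ;v₁,v₂) and [s₁∘S₁, s₂∘S₁; v₁,v₂]_{v₁} = P₁(α, −2γ, β+3γ; v₁,v₂); and if S₂(v₁,v₂) ∈ D then the pair (s₁∘S₂, s₂∘S₂) satisfies {s₁∘S₂, s₂∘S₂; v₁,v₂}_{v₂} = F₂(γ;v₁,v₂) and [s₁∘S₂, s₂∘S₂; v₁,v₂]_{v₂} = P₂(α, −2γ, β+3γ; v₁,v₂). -/

import Mathlib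

open Complex Matrix

noncomputable section

/-- Partial derivative in the first complex variable. -/
def pdx (f : ℂ × ℂ → ℂ) (p : ℂ × ℂ) : ℂ := deriv (fun x => f (x, p.2)) p.1

/-- Partial derivative in the second complex variable. -/
def pdy (f : ℂ × ℂ → ℂ) (p : ℂ × ℂ) : ℂ := deriv (fun y => f (p.1, y)) p.2

/-- The Jacobian `J(u₁,u₂) = ∂ₓu₁·∂ᵧu₂ − ∂ₓu₂·∂ᵧu₁`. -/
def Jac (u₁ u₂ : ℂ × ℂ → ℂ) (p : ℂ × ℂ) : ℂ :=
  pdx u₁ p * pdy u₂ p - pdx u₂ p * pdy u₁ p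

/-- The GL(3) derivative `{u₁,u₂;x,y}ₓ`. -/
def brX (u₁ u₂ : ℂ × ℂ → ℂ) (p : ℂ × ℂ) : ℂ :=
  (pdx u₁ p * pdx (pdx u₂) p - pdx u₂ p * pdx (pdx u₁) p) / Jac u₁ u₂ p

/-- The GL(3) derivative `{u₁,u₂;x,y}ᵧ`. -/
def brY (u₁ u₂ : ℂ × ℂ → ℂ) (p : ℂ × ℂ) : ℂ :=
  -(pdy u₁ p * pdy (pdy u₂) p - pdy u₂ p * pdy (pdy u₁) p) / Jac u₁ u₂ p

/-- The GL(3) derivative `[u₁,u₂;x,y]ₓ`. -/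
def sqX (u₁ u₂ : ℂ × ℂ → ℂ) (p : ℂ × ℂ) : ℂ :=
  ((pdy u₁ p * pdx (pdx u₂) p - pdy u₂ p * pdx (pdx u₁) p)
      + 2 * (pdx u₁ p * pdx (pdy u₂) p - pdx u₂ p * pdx (pdy u₁) p)) / Jac u₁ u₂ p

/-- The GL(3) derivative `[u₁,u₂;x,y]ᵧ`. -/
def sqY (u₁ u₂ : ℂ × ℂ → ℂ) (p : ℂ × ℂ) : ℂ :=
  -((pdx u₁ p * pdy (pdy u₂) p - pdx u₂ p * pdy (pdy u₁) p)
      + 2 * (pdy u₁ p * pdx (pdy u₂) p - pdy u₂ p * pdx (pdy u₁) p)) / Jac u₁ u₂ p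

/-- The coefficient `F₁(γ;v₁,v₂)`. -/
def F1 (γ : ℂ) (p : ℂ × ℂ) : ℂ :=
  -γ * p.2 * (p.2 - 1) / (p.1 * (p.1 - 1) * (p.1 - p.2))

/-- The coefficient `F₂(γ;v₁,v₂)`. -/
def F2 (γ : ℂ) (p : ℂ × ℂ) : ℂ :=
  -γ * p.1 * (p.1 - 1) / (p.2 * (p.2 - 1) * (p.2 - p.1))

/-- The coefficient `P₁(α,β,γ;v₁,v₂)`. -/
def P1 (α β γ : ℂ) (p : ℂ × ℂ) : ℂ := α / p.1 + β / (p.1 - 1) + γ / (p.1 - p.2)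

/-- The coefficient `P₂(α,β,γ;v₁,v₂)`. -/
def P2 (α β γ : ℂ) (p : ℂ × ℂ) : ℂ := α / p.2 + β / (p.2 - 1) + γ / (p.2 - p.1)

/-- The map `S₁(v₁,v₂) = (v₁/v₂, 1/v₂)`. -/
def S1map (p : ℂ × ℂ) : ℂ × ℂ := (p.1 / p.2, 1 / p.2)

/-- The map `S₂(v₁,v₂) = (1/v₁, v₂/v₁)`. -/
def S2map (p : ℂ × ℂ) : ℂ × ℂ := (1 / p.1, p.2 / p.1)

/-!
A holomorphic map is continuously differentiable to every order: the Schwarz lemma bounds its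
first-order Taylor remainder quadratically, so the difference quotients in a fixed direction
converge locally uniformly, and a locally uniform limit of holomorphic maps is holomorphic. Hence
the chain rule may be applied twice. At a point `(v₁, v₂)`, composing with `S₁` turns `J` into
`-J / v₂³`, `{·}_{v₁}` into `-{·}_{v₁}`, and `[·]_{v₁}` into `([·]_{v₁} + 3 v₁ {·}_{v₁}) / v₂`, and
the coefficients `F₁` and `P₁` obey the matching rational identities. The swap of coordinates
conjugates `S₁` to `S₂` and interchanges the `v₁`- and `v₂`-derivatives; for the square brackets,
whose definitions use one order of the mixed partials only, this needs their symmetry.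
-/

open Metric Set Filter Topology

section Holomorphic

variable {E F : Type*} [NormedAddCommGroup E] [NormedSpace ℂ E] [NormedAddCommGroup F]
  [NormedSpace ℂ F]

theorem norm_sub_sub_fderiv_le_of_mapsTo_ball {f : E → F} {c z : E} {R₁ R₂ : ℝ}
    (hd : DifferentiableOn ℂ f (ball c R₁)) (h_maps : MapsTo f (ball c R₁) (closedBall (f c) R₂))
    (hz : z ∈ ball c R₁) :
    ‖f z - f c - fderiv ℂ f c (z - c)‖ ≤ 2 * R₂ * (‖z - c‖ / R₁) ^ 2 := by
  have hR₁ : 0 < R₁ := nonempty_ball.1 ⟨z, hz⟩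
  set g : E → F := fun w => f w - f c - fderiv ℂ f c (w - c)
  have hgc : g c = 0 := by simp [g]
  have hg_diff : DifferentiableOn ℂ g (ball c R₁) :=
    (hd.sub_const _).sub
      ((fderiv ℂ f c).differentiable.comp (differentiable_id.sub_const c)).differentiableOn
  have hg_maps : MapsTo g (ball c R₁) (closedBall (g c) (2 * R₂)) := fun w hw => by
    have hf_le : ‖f w - f c‖ ≤ R₂ := mem_closedBall_iff_norm.1 (h_maps hw)
    have hfd_le : ‖fderiv ℂ f c (w - c)‖ ≤ R₂ := by
      calc ‖fderiv ℂ f c (w - c)‖ ≤ R₂ / R₁ * R₁ :=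
            ContinuousLinearMap.le_of_opNorm_le_of_le _
              (Complex.norm_fderiv_le_div_of_mapsTo_ball hd h_maps hR₁)
              (mem_ball_iff_norm.1 hw).le
        _ = R₂ := div_mul_cancel₀ _ hR₁.ne'
    rw [mem_closedBall_iff_norm, hgc, sub_zero]
    exact (norm_sub_le _ _).trans (by linarith)
  have hg_littleO : (g · - g c) =o[𝓝 c] fun w => ‖w - c‖ ^ 1 := by
    simpa [hgc, g] using
      (hd.differentiableAt (ball_mem_nhds c hR₁)).hasFDerivAt.isLittleO.norm_right
  simpa [hgc, g, dist_eq_norm] using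
    Complex.dist_le_mul_div_pow_of_mapsTo_ball_of_isLittleO hg_diff hg_maps hg_littleO hz

theorem uniformCauchySeqOn_fderiv_ball {ι : Type*} {f : ι → E → F} {l : Filter ι}
    {c : E} {r : ℝ} (hr : 0 < r) (hf : UniformCauchySeqOn f l (ball c (2 * r)))
    (hd : ∀ᶠ n in l, DifferentiableOn ℂ (f n) (ball c (2 * r))) :
    UniformCauchySeqOn (fun n => fderiv ℂ (f n)) l (ball c r) := by
  intro u hu
  obtain ⟨ε, hε, hεu⟩ := Metric.mem_uniformity_dist.1 hu
  filter_upwards [hf _ (dist_mem_uniformity (show 0 < ε * r / 4 by positivity)),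
    hd.prod_mk hd] with ⟨m, n⟩ hmn ⟨hm, hn⟩ q hq
  have hsub : ball q r ⊆ ball c (2 * r) :=
    ball_subset_ball' (by linarith [mem_ball.1 hq])
  have h_maps : MapsTo (f m - f n) (ball q r) (closedBall ((f m - f n) q) (ε * r / 2)) := by
    intro z hz
    have hz_lt := hmn z (hsub hz)
    have hq_lt := hmn q (hsub (mem_ball_self hr))
    simp only [dist_eq_norm] at hz_lt hq_lt
    rw [mem_closedBall_iff_norm]
    exact (norm_sub_le _ _).trans (by simp only [Pi.sub_apply]; linarith)
  have hq_nhds : ball c (2 * r) ∈ 𝓝 q := isOpen_ball.mem_nhds (hsub (mem_ball_self hr))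
  refine hεu ?_
  calc dist (fderiv ℂ (f m) q) (fderiv ℂ (f n) q) = ‖fderiv ℂ (f m - f n) q‖ := by
        rw [dist_eq_norm, fderiv_sub (hm.differentiableAt hq_nhds) (hn.differentiableAt hq_nhds)]
    _ ≤ ε * r / 2 / r :=
        Complex.norm_fderiv_le_div_of_mapsTo_ball ((hm.sub hn).mono hsub) h_maps hr
    _ = ε / 2 := by field_simp
    _ < ε := half_lt_self hε

theorem differentiableAt_of_tendstoUniformlyOn {ι : Type*} [CompleteSpace F] {f : ι → E → F}
    {g : E → F} {l : Filter ι} [l.NeBot] {s : Set E} {c : E} (hs : s ∈ 𝓝 c)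
    (hf : TendstoUniformlyOn f g l s) (hd : ∀ᶠ n in l, DifferentiableOn ℂ (f n) s) :
    DifferentiableAt ℂ g c := by
  obtain ⟨ρ, hρ, hρs⟩ := Metric.mem_nhds_iff.1 hs
  obtain ⟨r, rfl⟩ : ∃ r, ρ = 2 * r := ⟨ρ / 2, by ring⟩
  have hr : 0 < r := by linarith
  have hrs : ball c r ⊆ s := (ball_subset_ball (by linarith)).trans hρs
  have hcauchy : UniformCauchySeqOn (fun n => fderiv ℂ (f n)) l (ball c r) :=
    uniformCauchySeqOn_fderiv_ball hr (hf.uniformCauchySeqOn.mono hρs)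
      (hd.mono fun n hn => hn.mono hρs)
  choose! g' hg' using fun q (hq : q ∈ ball c r) =>
    CompleteSpace.complete (hcauchy.cauchy_map hq)
  have hlim : TendstoUniformlyOnFilter (fun n => fderiv ℂ (f n)) g' l (𝓝 c) :=
    (hcauchy.tendstoUniformlyOn_of_tendsto hg').tendstoUniformlyOnFilter.mono_right
      (le_principal_iff.2 (ball_mem_nhds c hr))
  refine (hasFDerivAt_of_tendstoUniformlyOnFilter (f := f) hlim ?_ ?_).differentiableAt
  · filter_upwards [hd.prod_mk (ball_mem_nhds c hr)] with ⟨n, q⟩ ⟨hn, hq⟩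
    exact (hn.differentiableAt (mem_of_superset (isOpen_ball.mem_nhds hq) hrs)).hasFDerivAt
  · filter_upwards [hs] with q hq using hf.tendsto_at hq

theorem eventually_norm_smul_lt (v : E) {r : ℝ} (hr : 0 < r) :
    ∀ᶠ t : ℂ in 𝓝[≠] 0, ‖t • v‖ < r := by
  have hcont : Continuous fun t : ℂ => ‖t • v‖ := by fun_prop
  exact nhdsWithin_le_nhds ((hcont.tendsto' 0 0 (by simp)).eventually_lt_const hr)

theorem tendstoUniformlyOn_slope_fderiv_apply {f : E → F} {c : E} {r C : ℝ}
    (hr : 0 < r) (hd : DifferentiableOn ℂ f (ball c (2 * r)))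
    (h_maps : MapsTo f (ball c (2 * r)) (closedBall (f c) C)) (v : E) :
    TendstoUniformlyOn (fun (t : ℂ) q => t⁻¹ • (f (q + t • v) - f q))
      (fun q => fderiv ℂ f q v) (𝓝[≠] 0) (ball c r) := by
  have hbound : ∀ t : ℂ, t ≠ 0 → ‖t • v‖ < r → ∀ q ∈ ball c r,
      ‖fderiv ℂ f q v - t⁻¹ • (f (q + t • v) - f q)‖ ≤ 4 * C * (‖v‖ / r) ^ 2 * ‖t‖ := by
    intro t ht htv q hq
    have hsub : ball q r ⊆ ball c (2 * r) := ball_subset_ball' (by linarith [mem_ball.1 hq])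
    have hq_maps : MapsTo f (ball q r) (closedBall (f q) (2 * C)) := fun z hz =>
      mem_closedBall.2 <| (dist_triangle_right _ _ (f c)).trans <| by
        linarith [mem_closedBall.1 (h_maps (hsub hz)),
          mem_closedBall.1 (h_maps (hsub (mem_ball_self hr)))]
    have htaylor := norm_sub_sub_fderiv_le_of_mapsTo_ball (hd.mono hsub) hq_maps
      (z := q + t • v) (by simpa [mem_ball_iff_norm] using htv)
    calc ‖fderiv ℂ f q v - t⁻¹ • (f (q + t • v) - f q)‖
        = ‖t‖⁻¹ * ‖f (q + t • v) - f q - fderiv ℂ f q (q + t • v - q)‖ := by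
          rw [norm_sub_rev, add_sub_cancel_left, map_smul, ← norm_inv, ← norm_smul,
            smul_sub t⁻¹ (f (q + t • v) - f q), inv_smul_smul₀ ht]
      _ ≤ ‖t‖⁻¹ * (2 * (2 * C) * (‖q + t • v - q‖ / r) ^ 2) := by gcongr
      _ = 4 * C * (‖v‖ / r) ^ 2 * ‖t‖ := by
          rw [add_sub_cancel_left, norm_smul]
          field_simp
          ring
  have hlim : Tendsto (fun t : ℂ => 4 * C * (‖v‖ / r) ^ 2 * ‖t‖) (𝓝[≠] 0) (𝓝 0) := by
    have : Continuous fun t : ℂ => 4 * C * (‖v‖ / r) ^ 2 * ‖t‖ := by fun_prop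
    exact (this.tendsto' 0 0 (by simp)).mono_left nhdsWithin_le_nhds
  refine Metric.tendstoUniformlyOn_iff.2 fun ε hε => ?_
  filter_upwards [self_mem_nhdsWithin, eventually_norm_smul_lt v hr,
    hlim.eventually_lt_const hε] with t ht htv htε q hq
  exact (dist_eq_norm (fderiv ℂ f q v) _).trans_lt ((hbound t ht htv q hq).trans_lt htε)

theorem differentiableOn_fderiv_apply [CompleteSpace F] {f : E → F}
    {U : Set E} (hU : IsOpen U) (hf : DifferentiableOn ℂ f U) (v : E) :
    DifferentiableOn ℂ (fun q => fderiv ℂ f q v) U := by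
  intro c hc
  obtain ⟨ρ, hρ, hρU⟩ : ∃ ρ > 0, ∀ q ∈ ball c ρ, q ∈ U ∧ f q ∈ closedBall (f c) 1 :=
    Metric.eventually_nhds_iff_ball.1 <| (hU.eventually_mem hc).and <|
      (hf.continuousOn.continuousAt (hU.mem_nhds hc)).eventually (closedBall_mem_nhds _ one_pos)
  obtain ⟨r, rfl⟩ : ∃ r, ρ = 2 * r := ⟨ρ / 2, by ring⟩
  have hr : 0 < r := by linarith
  have hd : DifferentiableOn ℂ f (ball c (2 * r)) := hf.mono fun q hq => (hρU q hq).1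
  refine (differentiableAt_of_tendstoUniformlyOn (ball_mem_nhds c hr)
    (tendstoUniformlyOn_slope_fderiv_apply hr hd (fun q hq => (hρU q hq).2) v)
    ?_).differentiableWithinAt
  filter_upwards [eventually_norm_smul_lt v hr] with t ht
  have hadd : MapsTo (· + t • v) (ball c r) (ball c (2 * r)) := fun q hq => by
    rw [mem_ball_iff_norm] at hq ⊢
    calc ‖q + t • v - c‖ = ‖(q - c) + t • v‖ := by congr 1; abel
      _ ≤ ‖q - c‖ + ‖t • v‖ := norm_add_le _ _
      _ < 2 * r := by linarith
  exact ((hd.comp (differentiable_id.add_const _).differentiableOn hadd).sub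
    (hd.mono (ball_subset_ball (by linarith)))).const_smul t⁻¹

theorem contDiffOn_of_differentiableOn_complex [FiniteDimensional ℂ E] [CompleteSpace F]
    {f : E → F} {U : Set E} (hU : IsOpen U) (hf : DifferentiableOn ℂ f U) (n : ℕ) :
    ContDiffOn ℂ n f U := by
  induction n generalizing f with
  | zero => simpa using hf.continuousOn
  | succ n ih =>
    rw [Nat.cast_succ, contDiffOn_succ_iff_fderiv_apply hU.uniqueDiffOn]
    refine ⟨hf, by simp, fun v => (ih (differentiableOn_fderiv_apply hU hf v)).congr fun q hq => ?_⟩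
    rw [fderivWithin_of_isOpen hU hq]

end Holomorphic

section ContDiffAt

variable {𝕜 E F : Type*} [NontriviallyNormedField 𝕜] [NormedAddCommGroup E] [NormedSpace 𝕜 E]
  [NormedAddCommGroup F] [NormedSpace 𝕜 F] {f : E → F} {p : E}

theorem eventually_differentiableAt_of_contDiffAt (hf : ContDiffAt 𝕜 1 f p) :
    ∀ᶠ q in 𝓝 p, DifferentiableAt 𝕜 f q :=
  (hf.eventually (by simp)).mono fun _ hq => hq.differentiableAt_one

theorem differentiableAt_fderiv_of_contDiffAt (hf : ContDiffAt 𝕜 2 f p) :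
    DifferentiableAt 𝕜 (fderiv 𝕜 f) p :=
  (hf.fderiv_right (m := 1) (by norm_num)).differentiableAt_one

end ContDiffAt

section PartialDerivatives

variable {f g : ℂ × ℂ → ℂ} {p : ℂ × ℂ}

theorem pdy_eq_pdx_comp_swap (f : ℂ × ℂ → ℂ) (p : ℂ × ℂ) :
    pdy f p = pdx (f ∘ Prod.swap) p.swap := rfl

theorem pdx_congr (h : f =ᶠ[𝓝 p] g) : pdx f p = pdx g p :=
  (h.comp_tendsto (Continuous.prodMk_left p.2).continuousAt).deriv_eq

theorem pdx_eq_fderiv (hf : DifferentiableAt ℂ f p) : pdx f p = fderiv ℂ f p (1, 0) :=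
  (hf.hasFDerivAt.comp_hasDerivAt p.1
    ((hasDerivAt_id p.1).prodMk (hasDerivAt_const p.1 p.2))).deriv

theorem pdy_eq_fderiv (hf : DifferentiableAt ℂ f p) : pdy f p = fderiv ℂ f p (0, 1) :=
  (hf.hasFDerivAt.comp_hasDerivAt p.2
    ((hasDerivAt_const p.2 p.1).prodMk (hasDerivAt_id p.2))).deriv

theorem fderiv_apply_eq_pdx_add_pdy (hf : DifferentiableAt ℂ f p) (v : ℂ × ℂ) :
    fderiv ℂ f p v = v.1 * pdx f p + v.2 * pdy f p := by
  have hv : v = v.1 • (1, 0) + v.2 • (0, 1) := by ext <;> simp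
  rw [pdx_eq_fderiv hf, pdy_eq_fderiv hf, ← smul_eq_mul, ← smul_eq_mul, ← map_smul, ← map_smul,
    ← map_add, ← hv]

theorem pdx_eventuallyEq_fderiv (hf : ContDiffAt ℂ 1 f p) :
    pdx f =ᶠ[𝓝 p] fun q => fderiv ℂ f q (1, 0) :=
  (eventually_differentiableAt_of_contDiffAt hf).mono fun _ => pdx_eq_fderiv

theorem pdy_eventuallyEq_fderiv (hf : ContDiffAt ℂ 1 f p) :
    pdy f =ᶠ[𝓝 p] fun q => fderiv ℂ f q (0, 1) :=
  (eventually_differentiableAt_of_contDiffAt hf).mono fun _ => pdy_eq_fderiv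

theorem differentiableAt_pdx (hf : ContDiffAt ℂ 2 f p) : DifferentiableAt ℂ (pdx f) p :=
  have hfderiv := (differentiableAt_fderiv_of_contDiffAt hf).clm_apply (differentiableAt_const _)
  hfderiv.congr_of_eventuallyEq (pdx_eventuallyEq_fderiv (hf.of_le one_le_two))

theorem differentiableAt_pdy (hf : ContDiffAt ℂ 2 f p) : DifferentiableAt ℂ (pdy f) p :=
  have hfderiv := (differentiableAt_fderiv_of_contDiffAt hf).clm_apply (differentiableAt_const _)
  hfderiv.congr_of_eventuallyEq (pdy_eventuallyEq_fderiv (hf.of_le one_le_two))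

theorem pdx_pdy_comm (hf : ContDiffAt ℂ 2 f p) : pdx (pdy f) p = pdy (pdx f) p := by
  have hdiff := differentiableAt_fderiv_of_contDiffAt hf
  have hf₁ : ContDiffAt ℂ 1 f p := hf.of_le one_le_two
  rw [pdx_eq_fderiv (differentiableAt_pdy hf), pdy_eq_fderiv (differentiableAt_pdx hf),
    (pdy_eventuallyEq_fderiv hf₁).fderiv_eq, (pdx_eventuallyEq_fderiv hf₁).fderiv_eq,
    fderiv_clm_apply hdiff (differentiableAt_const _),
    fderiv_clm_apply hdiff (differentiableAt_const _)]
  simpa using (hf.isSymmSndFDerivAt (by simp)).eq (1, 0) (0, 1)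

end PartialDerivatives

section Swap

variable {f u₁ u₂ : ℂ × ℂ → ℂ} {p : ℂ × ℂ}

theorem contDiffAt_comp_swap (hf : ContDiffAt ℂ 2 f p) :
    ContDiffAt ℂ 2 (f ∘ Prod.swap) p.swap :=
  hf.comp p.swap (contDiff_snd.prodMk contDiff_fst).contDiffAt

theorem Jac_comp_swap (u₁ u₂ : ℂ × ℂ → ℂ) (p : ℂ × ℂ) :
    Jac (u₁ ∘ Prod.swap) (u₂ ∘ Prod.swap) p.swap = -Jac u₁ u₂ p := by
  simp only [Jac, ← pdy_eq_pdx_comp_swap]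
  change pdy u₁ p * pdx u₂ p - pdy u₂ p * pdx u₁ p = _
  ring

theorem brX_comp_swap (u₁ u₂ : ℂ × ℂ → ℂ) (p : ℂ × ℂ) :
    brX (u₁ ∘ Prod.swap) (u₂ ∘ Prod.swap) p.swap = brY u₁ u₂ p := by
  rw [brX, Jac_comp_swap, brY, neg_div, div_neg]
  rfl

theorem sqX_comp_swap (hu₁ : ContDiffAt ℂ 2 u₁ p) (hu₂ : ContDiffAt ℂ 2 u₂ p) :
    sqX (u₁ ∘ Prod.swap) (u₂ ∘ Prod.swap) p.swap = sqY u₁ u₂ p := by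
  rw [sqX, Jac_comp_swap, sqY, pdx_pdy_comm hu₁, pdx_pdy_comm hu₂, neg_div, div_neg]
  rfl

end Swap

section CompS1map

variable {f u₁ u₂ : ℂ × ℂ → ℂ} {p : ℂ × ℂ}

theorem continuousAt_S1map (hp : p.2 ≠ 0) : ContinuousAt S1map p :=
  (continuousAt_fst.div continuousAt_snd hp).prodMk (continuousAt_const.div continuousAt_snd hp)

theorem hasDerivAt_comp_S1map_fst (hf : DifferentiableAt ℂ f (S1map p)) :
    HasDerivAt (fun x => f (S1map (x, p.2))) (pdx f (S1map p) / p.2) p.1 := by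
  have hS₁ : HasDerivAt (fun x => S1map (x, p.2)) (1 / p.2, 0) p.1 :=
    ((hasDerivAt_id p.1).div_const p.2).prodMk (hasDerivAt_const p.1 (1 / p.2))
  refine (hf.hasFDerivAt.comp_hasDerivAt p.1 hS₁).congr_deriv ?_
  rw [fderiv_apply_eq_pdx_add_pdy hf, zero_mul, add_zero, one_div_mul_eq_div]

theorem pdx_comp_S1map (hf : DifferentiableAt ℂ f (S1map p)) :
    pdx (fun q => f (S1map q)) p = pdx f (S1map p) / p.2 :=
  (hasDerivAt_comp_S1map_fst hf).deriv

theorem pdy_comp_S1map (hp : p.2 ≠ 0) (hf : DifferentiableAt ℂ f (S1map p)) :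
    pdy (fun q => f (S1map q)) p = -(p.1 * pdx f (S1map p) + pdy f (S1map p)) / p.2 ^ 2 := by
  have hdiv (c : ℂ) : HasDerivAt (fun y => c / y) (-c / p.2 ^ 2) p.2 := by
    simpa [div_eq_mul_inv] using (hasDerivAt_inv hp).const_mul c
  have hS₁ : HasDerivAt (fun y => S1map (p.1, y)) (-p.1 / p.2 ^ 2, -1 / p.2 ^ 2) p.2 :=
    (hdiv p.1).prodMk (hdiv 1)
  refine (hf.hasFDerivAt.comp_hasDerivAt p.2 hS₁).deriv.trans ?_
  rw [fderiv_apply_eq_pdx_add_pdy hf]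
  ring

theorem eventually_differentiableAt_S1map (hp : p.2 ≠ 0) (hf : ContDiffAt ℂ 1 f (S1map p)) :
    ∀ᶠ q in 𝓝 p, q.2 ≠ 0 ∧ DifferentiableAt ℂ f (S1map q) :=
  (continuousAt_snd.eventually_ne hp).and
    ((continuousAt_S1map hp).eventually (eventually_differentiableAt_of_contDiffAt hf))

theorem pdx_pdx_comp_S1map (hp : p.2 ≠ 0) (hf : ContDiffAt ℂ 2 f (S1map p)) :
    pdx (pdx fun q => f (S1map q)) p = pdx (pdx f) (S1map p) / p.2 ^ 2 := by
  have hpdx : (pdx fun q => f (S1map q)) =ᶠ[𝓝 p] fun q => pdx f (S1map q) / q.2 :=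
    (eventually_differentiableAt_S1map hp (hf.of_le one_le_two)).mono fun _ hq =>
      pdx_comp_S1map hq.2
  rw [pdx_congr hpdx, sq, ← div_div]
  exact ((hasDerivAt_comp_S1map_fst (differentiableAt_pdx hf)).div_const p.2).deriv

theorem pdx_pdy_comp_S1map (hp : p.2 ≠ 0) (hf : ContDiffAt ℂ 2 f (S1map p)) :
    pdx (pdy fun q => f (S1map q)) p =
      -(pdx f (S1map p) + (p.1 * pdx (pdx f) (S1map p) + pdx (pdy f) (S1map p)) / p.2) /
        p.2 ^ 2 := by
  have hpdy : (pdy fun q => f (S1map q)) =ᶠ[𝓝 p]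
      fun q => -(q.1 * pdx f (S1map q) + pdy f (S1map q)) / q.2 ^ 2 :=
    (eventually_differentiableAt_S1map hp (hf.of_le one_le_two)).mono fun _ hq =>
      pdy_comp_S1map hq.1 hq.2
  have hderiv := ((((hasDerivAt_id p.1).mul
    (hasDerivAt_comp_S1map_fst (differentiableAt_pdx hf))).add
    (hasDerivAt_comp_S1map_fst (differentiableAt_pdy hf))).neg.div_const (p.2 ^ 2)).deriv
  rw [pdx_congr hpdy]
  refine hderiv.trans ?_
  simp only [id]
  ring

theorem Jac_comp_S1map (hp : p.2 ≠ 0) (hu₁ : DifferentiableAt ℂ u₁ (S1map p))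
    (hu₂ : DifferentiableAt ℂ u₂ (S1map p)) :
    Jac (fun q => u₁ (S1map q)) (fun q => u₂ (S1map q)) p = -Jac u₁ u₂ (S1map p) / p.2 ^ 3 := by
  simp only [Jac, pdx_comp_S1map hu₁, pdx_comp_S1map hu₂, pdy_comp_S1map hp hu₁,
    pdy_comp_S1map hp hu₂]
  field_simp
  ring

theorem brX_comp_S1map (hp : p.2 ≠ 0) (hu₁ : ContDiffAt ℂ 2 u₁ (S1map p))
    (hu₂ : ContDiffAt ℂ 2 u₂ (S1map p)) :
    brX (fun q => u₁ (S1map q)) (fun q => u₂ (S1map q)) p = -brX u₁ u₂ (S1map p) := by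
  have hd₁ := hu₁.differentiableAt two_ne_zero
  have hd₂ := hu₂.differentiableAt two_ne_zero
  rw [brX, brX, Jac_comp_S1map hp hd₁ hd₂, pdx_comp_S1map hd₁, pdx_comp_S1map hd₂,
    pdx_pdx_comp_S1map hp hu₁, pdx_pdx_comp_S1map hp hu₂]
  field_simp

theorem sqX_comp_S1map (hp : p.2 ≠ 0) (hu₁ : ContDiffAt ℂ 2 u₁ (S1map p))
    (hu₂ : ContDiffAt ℂ 2 u₂ (S1map p)) :
    sqX (fun q => u₁ (S1map q)) (fun q => u₂ (S1map q)) p =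
      (sqX u₁ u₂ (S1map p) + 3 * p.1 * brX u₁ u₂ (S1map p)) / p.2 := by
  have hd₁ := hu₁.differentiableAt two_ne_zero
  have hd₂ := hu₂.differentiableAt two_ne_zero
  rw [sqX, sqX, brX, Jac_comp_S1map hp hd₁ hd₂, pdx_comp_S1map hd₁, pdx_comp_S1map hd₂,
    pdy_comp_S1map hp hd₁, pdy_comp_S1map hp hd₂, pdx_pdx_comp_S1map hp hu₁,
    pdx_pdx_comp_S1map hp hu₂, pdx_pdy_comp_S1map hp hu₁, pdx_pdy_comp_S1map hp hu₂]
  field_simp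
  ring

end CompS1map

section Coefficients

variable {p : ℂ × ℂ}

theorem F1_S1map (γ : ℂ) (hp : p.2 ≠ 0) : F1 γ (S1map p) = -F1 γ p := by
  have h₁ : p.1 / p.2 - 1 = (p.1 - p.2) / p.2 := by field_simp
  have h₂ : 1 / p.2 - 1 = (1 - p.2) / p.2 := by field_simp
  simp only [F1, S1map, h₁, h₂, ← sub_div]
  field_simp
  ring

theorem P1_S1map_add (α β γ : ℂ) (h₁ : p.1 ≠ 0) (h₁' : p.1 ≠ 1) (h₂ : p.2 ≠ 0)
    (h₁₂ : p.1 ≠ p.2) :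
    (P1 α β γ (S1map p) + 3 * p.1 * F1 γ (S1map p)) / p.2 = P1 α (-2 * γ) (β + 3 * γ) p := by
  have h₁_sub : p.1 - 1 ≠ 0 := sub_ne_zero.2 h₁'
  have h₁₂_sub : p.1 - p.2 ≠ 0 := sub_ne_zero.2 h₁₂
  have h_div : p.1 / p.2 - 1 = (p.1 - p.2) / p.2 := by field_simp
  rw [F1_S1map γ h₂]
  simp only [F1, P1, S1map, h_div, ← sub_div]
  field_simp
  ring

theorem F2_S2map (γ : ℂ) (hp : p.1 ≠ 0) : F2 γ (S2map p) = -F2 γ p :=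
  F1_S1map (p := p.swap) γ hp

theorem P2_S2map_add (α β γ : ℂ) (h₁ : p.1 ≠ 0) (h₂ : p.2 ≠ 0) (h₂' : p.2 ≠ 1)
    (h₁₂ : p.1 ≠ p.2) :
    (P2 α β γ (S2map p) + 3 * p.2 * F2 γ (S2map p)) / p.1 = P2 α (-2 * γ) (β + 3 * γ) p :=
  P1_S1map_add (p := p.swap) α β γ h₂ h₂' h₁ h₁₂.symm

end Coefficients

section CompS2map

variable {u₁ u₂ : ℂ × ℂ → ℂ} {p : ℂ × ℂ}

theorem contDiffAt_S2map (hp : p.1 ≠ 0) : ContDiffAt ℂ 2 S2map p :=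
  (contDiffAt_const.div contDiffAt_fst hp).prodMk (contDiffAt_snd.div contDiffAt_fst hp)

theorem brY_comp_S2map (hp : p.1 ≠ 0) (hu₁ : ContDiffAt ℂ 2 u₁ (S2map p))
    (hu₂ : ContDiffAt ℂ 2 u₂ (S2map p)) :
    brY (fun q => u₁ (S2map q)) (fun q => u₂ (S2map q)) p = -brY u₁ u₂ (S2map p) :=
  calc brY (fun q => u₁ (S2map q)) (fun q => u₂ (S2map q)) p
      = brX (fun q => (u₁ ∘ Prod.swap) (S1map q)) (fun q => (u₂ ∘ Prod.swap) (S1map q)) p.swap :=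
        (brX_comp_swap (fun q => u₁ (S2map q)) (fun q => u₂ (S2map q)) p).symm
    _ = -brX (u₁ ∘ Prod.swap) (u₂ ∘ Prod.swap) (S2map p).swap :=
        brX_comp_S1map hp (contDiffAt_comp_swap hu₁) (contDiffAt_comp_swap hu₂)
    _ = -brY u₁ u₂ (S2map p) := by rw [brX_comp_swap]

theorem sqY_comp_S2map (hp : p.1 ≠ 0) (hu₁ : ContDiffAt ℂ 2 u₁ (S2map p))
    (hu₂ : ContDiffAt ℂ 2 u₂ (S2map p)) :
    sqY (fun q => u₁ (S2map q)) (fun q => u₂ (S2map q)) p =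
      (sqY u₁ u₂ (S2map p) + 3 * p.2 * brY u₁ u₂ (S2map p)) / p.1 :=
  calc sqY (fun q => u₁ (S2map q)) (fun q => u₂ (S2map q)) p
      = sqX (fun q => (u₁ ∘ Prod.swap) (S1map q)) (fun q => (u₂ ∘ Prod.swap) (S1map q)) p.swap :=
        (sqX_comp_swap (hu₁.comp p (contDiffAt_S2map hp))
          (hu₂.comp p (contDiffAt_S2map hp))).symm
    _ = (sqX (u₁ ∘ Prod.swap) (u₂ ∘ Prod.swap) (S2map p).swap +
          3 * p.2 * brX (u₁ ∘ Prod.swap) (u₂ ∘ Prod.swap) (S2map p).swap) / p.1 :=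
        sqX_comp_S1map hp (contDiffAt_comp_swap hu₁) (contDiffAt_comp_swap hu₂)
    _ = (sqY u₁ u₂ (S2map p) + 3 * p.2 * brY u₁ u₂ (S2map p)) / p.1 := by
        rw [brX_comp_swap, sqX_comp_swap hu₁ hu₂]

end CompS2map

/-- **Main Proposition 3, part (2).** Transformation of the triangular
s-functions under `S₁` and `S₂`: the parameters `(α,β,γ)` become `(α,−2γ,β+3γ)`. -/
theorem statement17 (α β γ : ℂ) (D : Set (ℂ × ℂ)) (hD : IsOpen D)
    (hDgood : ∀ p ∈ D, p.1 ≠ 0 ∧ p.1 ≠ 1 ∧ p.2 ≠ 0 ∧ p.2 ≠ 1 ∧ p.1 ≠ p.2)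
    (s₁ s₂ : ℂ × ℂ → ℂ)
    (hs₁ : DifferentiableOn ℂ s₁ D) (hs₂ : DifferentiableOn ℂ s₂ D)
    (hJ : ∀ p ∈ D, Jac s₁ s₂ p ≠ 0)
    (h₁ : ∀ p ∈ D, brX s₁ s₂ p = F1 γ p)
    (h₂ : ∀ p ∈ D, brY s₁ s₂ p = F2 γ p)
    (h₃ : ∀ p ∈ D, sqX s₁ s₂ p = P1 α β γ p)
    (h₄ : ∀ p ∈ D, sqY s₁ s₂ p = P2 α β γ p) :
    ∀ p : ℂ × ℂ, p.1 ≠ 0 → p.1 ≠ 1 → p.2 ≠ 0 → p.2 ≠ 1 → p.1 ≠ p.2 →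
      (S1map p ∈ D →
        brX (fun q => s₁ (S1map q)) (fun q => s₂ (S1map q)) p = F1 γ p ∧
        sqX (fun q => s₁ (S1map q)) (fun q => s₂ (S1map q)) p =
          P1 α (-2 * γ) (β + 3 * γ) p) ∧
      (S2map p ∈ D →
        brY (fun q => s₁ (S2map q)) (fun q => s₂ (S2map q)) p = F2 γ p ∧
        sqY (fun q => s₁ (S2map q)) (fun q => s₂ (S2map q)) p =
          P2 α (-2 * γ) (β + 3 * γ) p) := by
  intro p hx hx1 hy hy1 hxy
  have hC₁ (q) (hq : q ∈ D) : ContDiffAt ℂ 2 s₁ q :=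
    (contDiffOn_of_differentiableOn_complex hD hs₁ 2).contDiffAt (hD.mem_nhds hq)
  have hC₂ (q) (hq : q ∈ D) : ContDiffAt ℂ 2 s₂ q :=
    (contDiffOn_of_differentiableOn_complex hD hs₂ 2).contDiffAt (hD.mem_nhds hq)
  refine ⟨fun hp => ⟨?_, ?_⟩, fun hp => ⟨?_, ?_⟩⟩
  · rw [brX_comp_S1map hy (hC₁ _ hp) (hC₂ _ hp), h₁ _ hp, F1_S1map γ hy, neg_neg]
  · rw [sqX_comp_S1map hy (hC₁ _ hp) (hC₂ _ hp), h₁ _ hp, h₃ _ hp,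
      P1_S1map_add α β γ hx hx1 hy hxy]
  · rw [brY_comp_S2map hx (hC₁ _ hp) (hC₂ _ hp), h₂ _ hp, F2_S2map γ hx, neg_neg]
  · rw [sqY_comp_S2map hx (hC₁ _ hp) (hC₂ _ hp), h₂ _ hp, h₄ _ hp,
      P2_S2map_add α β γ hx hy hy1 hxy]
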